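/- There exists a 1-periodic, even, real-valued C^∞ function p: ℝ → ℝ such that p(x)² + p(x+1/2)² = 2 for all x, p vanishes together with all its derivatives on [1/7, 3/14] ∪ [3/7, 1/2], and p(0) = √2. -/

import Mathlib

/-!
Let `K` be compact with `x ± y ∉ 1/2 + ℤ` for all `x, y ∈ K`. Every function of `cos (2πx)` is
even and 1-periodic in `x`, and `x ↦ x + 1/2` acts on `c = cos (2πx)` as `c ↦ -c`. So it suffices
to find a smooth `g` with `g(c)² + g(-c)² = 2` vanishing near the image `Z` of `K` under
`cos (2π·)`, and the condition on `K` says precisely that `Z` and `-Z` are disjoint. Take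
`g = √2 sin (πs/2)`, where `s` is smooth, vanishes near `Z` and satisfies `s(c) + s(-c) = 1`; such
an `s` is obtained by symmetrizing a smooth Urysohn function.
-/

open Filter Function Real Set
open scoped ContDiff Manifold Topology

section Involution

variable {E : Type*} [NormedAddCommGroup E] [NormedSpace ℝ E] [FiniteDimensional ℝ E]
  {σ : E → E} {Z : Set E}

theorem exists_contDiff_add_comp_involutive_eq_one (hσ : Involutive σ) (hσ_smooth : ContDiff ℝ ∞ σ)
    (hZ : IsClosed Z) (hd : Disjoint Z (σ ⁻¹' Z)) :
    ∃ s : E → ℝ, ContDiff ℝ ∞ s ∧ (∀ c, s c + s (σ c) = 1) ∧ ∀ᶠ c in 𝓝ˢ Z, s c = 0 := by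
  have hσ_cont : Continuous σ := hσ_smooth.continuous
  obtain ⟨f, hf_zero, hf_one, -⟩ := exists_contMDiffMap_zero_one_nhds_of_isClosed 𝓘(ℝ, E) (n := ⊤)
    hZ (hZ.preimage hσ_cont) hd
  have hf : ContDiff ℝ ∞ f := f.contMDiff.contDiff
  have hσ_maps : MapsTo σ Z (σ ⁻¹' Z) := fun c hc ↦ by rwa [mem_preimage, hσ c]
  have hf_one' : ∀ᶠ c in 𝓝ˢ Z, f (σ c) = 1 :=
    (hσ_cont.tendsto_nhdsSet hσ_maps).eventually hf_one
  refine ⟨fun c ↦ (f c + 1 - f (σ c)) / 2, by fun_prop, fun c ↦ ?_, ?_⟩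
  · simp only [hσ c]
    ring
  · filter_upwards [hf_zero, hf_one'] with c h0 h1
    rw [h0, h1]
    norm_num

theorem exists_contDiff_sq_add_sq_comp_involutive_eq (hσ : Involutive σ)
    (hσ_smooth : ContDiff ℝ ∞ σ) (hZ : IsClosed Z) (hd : Disjoint Z (σ ⁻¹' Z)) (r : ℝ) :
    ∃ g : E → ℝ, ContDiff ℝ ∞ g ∧ (∀ c, g c ^ 2 + g (σ c) ^ 2 = r ^ 2) ∧
      (∀ᶠ c in 𝓝ˢ Z, g c = 0) ∧ ∀ c ∈ σ ⁻¹' Z, g c = r := by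
  obtain ⟨s, hs, hs_add, hs_zero⟩ :=
    exists_contDiff_add_comp_involutive_eq_one hσ hσ_smooth hZ hd
  refine ⟨fun c ↦ r * sin (π / 2 * s c), by fun_prop, fun c ↦ ?_, ?_, fun c hc ↦ ?_⟩
  · have hs_comp : π / 2 * s (σ c) = π / 2 - π / 2 * s c := by linear_combination π / 2 * hs_add c
    simp only [hs_comp, sin_pi_div_two_sub]
    linear_combination r ^ 2 * sin_sq_add_cos_sq (π / 2 * s c)
  · filter_upwards [hs_zero] with c hc
    rw [hc, mul_zero, sin_zero, mul_zero]
  · have hs_one : s c = 1 := by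
      rw [← hs_add c, hs_zero.self_of_nhdsSet _ hc, add_zero]
    simp only [hs_one, mul_one, sin_pi_div_two]

end Involution

theorem cos_pi_mul_eq_zero_iff {t : ℝ} : cos (π * t) = 0 ↔ ∃ k : ℤ, t = k + 1 / 2 := by
  rw [cos_eq_zero_iff]
  refine exists_congr fun k ↦ ?_
  rw [← mul_right_inj' pi_ne_zero (b := t)]
  ring_nf

theorem cos_two_pi_mul_eq_neg_cos_iff {x y : ℝ} :
    cos (2 * π * x) = -cos (2 * π * y) ↔
      ∃ k : ℤ, x + y = k + 1 / 2 ∨ x - y = k + 1 / 2 := by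
  have h_add : (2 * π * x + 2 * π * y) / 2 = π * (x + y) := by ring
  have h_sub : (2 * π * x - 2 * π * y) / 2 = π * (x - y) := by ring
  rw [eq_neg_iff_add_eq_zero, cos_add_cos, h_add, h_sub, mul_eq_zero, mul_eq_zero,
    cos_pi_mul_eq_zero_iff, cos_pi_mul_eq_zero_iff, exists_or]
  simp only [OfNat.ofNat_ne_zero, false_or]

theorem cos_two_pi_mul_add_half (x : ℝ) : cos (2 * π * (x + 1 / 2)) = -cos (2 * π * x) := by
  rw [← cos_add_pi]
  ring_nf

theorem stmt6_general {K : Set ℝ} (hK : IsCompact K)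
    (hK_half : ∀ x ∈ K, ∀ y ∈ K, ∀ k : ℤ, x + y ≠ k + 1 / 2 ∧ x - y ≠ k + 1 / 2) :
    ∃ p : ℝ → ℝ,
      ContDiff ℝ ∞ p ∧
      (∀ x, p (x + 1) = p x) ∧
      (∀ x, p (-x) = p x) ∧
      (∀ x, p x ^ 2 + p (x + 1 / 2) ^ 2 = 2) ∧
      (∀ n : ℕ, ∀ x ∈ K, iteratedDeriv n p x = 0) ∧
      ∀ x, x + 1 / 2 ∈ K → p x = √2 := by
  set u : ℝ → ℝ := fun x ↦ cos (2 * π * x) with hu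
  have hu_cont : Continuous u := by fun_prop
  have hd : Disjoint (u '' K) (Neg.neg ⁻¹' (u '' K)) := by
    rw [Set.disjoint_left]
    rintro _ ⟨x, hx, rfl⟩ ⟨y, hy, hxy⟩
    obtain ⟨k, hk⟩ := cos_two_pi_mul_eq_neg_cos_iff.mp (neg_eq_iff_eq_neg.mp hxy.symm)
    exact hk.elim (hK_half x hx y hy k).1 (hK_half x hx y hy k).2
  obtain ⟨g, hg, hg_sq, hg_zero, hg_sqrt⟩ := exists_contDiff_sq_add_sq_comp_involutive_eq
    neg_involutive contDiff_neg (hK.image hu_cont).isClosed hd √2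
  have hgu_zero : ∀ᶠ x in 𝓝ˢ K, g (u x) = 0 :=
    (hu_cont.tendsto_nhdsSet (mapsTo_image u K)).eventually hg_zero
  refine ⟨fun x ↦ g (u x), by fun_prop, fun x ↦ ?_, fun x ↦ ?_, fun x ↦ ?_, fun n x hx ↦ ?_,
    fun x hx ↦ hg_sqrt _ ⟨x + 1 / 2, hx, cos_two_pi_mul_add_half x⟩⟩
  · simp only [hu, mul_add, mul_one, cos_add_two_pi]
  · simp only [hu, mul_neg, cos_neg]
  · simp only [hu, cos_two_pi_mul_add_half, hg_sq, sq_sqrt zero_le_two]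
  · have h_zero : (fun x ↦ g (u x)) =ᶠ[𝓝 x] fun _ ↦ 0 := hgu_zero.filter_mono (nhds_le_nhdsSet hx)
    rw [h_zero.iteratedDeriv_eq n, iteratedDeriv_fun_const_zero]

theorem add_ne_and_sub_ne_int_add_half {x y : ℝ}
    (hx : x ∈ Icc (1 / 7 : ℝ) (3 / 14) ∪ Icc (3 / 7 : ℝ) (1 / 2))
    (hy : y ∈ Icc (1 / 7 : ℝ) (3 / 14) ∪ Icc (3 / 7 : ℝ) (1 / 2)) (k : ℤ) :
    x + y ≠ k + 1 / 2 ∧ x - y ≠ k + 1 / 2 := by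
  simp only [mem_union, mem_Icc] at hx hy
  constructor <;> intro h
  · have hk_gt : (-1 : ℝ) < k := by grind
    have hk_lt : (k : ℝ) < 1 := by grind
    obtain rfl : k = 0 := by
      norm_cast at hk_gt hk_lt
      lia
    grind
  · have hk_gt : (-1 : ℝ) < k := by grind
    have hk_lt : (k : ℝ) < 0 := by grind
    norm_cast at hk_gt hk_lt
    lia

/-- There exists a 1-periodic, even, real-valued `C^∞` function
`p : ℝ → ℝ` with `p(x)² + p(x+1/2)² = 2` for all `x`, vanishing together with
all its derivatives on `[1/7, 3/14] ∪ [3/7, 1/2]`, and with `p 0 = √2`. -/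
theorem stmt6 :
    ∃ p : ℝ → ℝ,
      ContDiff ℝ (⊤ : ℕ∞) p ∧
      (∀ x, p (x + 1) = p x) ∧
      (∀ x, p (-x) = p x) ∧
      (∀ x, p x ^ 2 + p (x + 1/2) ^ 2 = 2) ∧
      (∀ (n : ℕ), ∀ x ∈ Set.Icc (1/7 : ℝ) (3/14) ∪ Set.Icc (3/7 : ℝ) (1/2),
        iteratedDeriv n p x = 0) ∧
      p 0 = Real.sqrt 2 := by
  obtain ⟨p, hp, h_per, h_even, h_sq, h_zero, h_sqrt⟩ :=
    stmt6_general (isCompact_Icc.union isCompact_Icc)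
      fun _ hx _ hy ↦ add_ne_and_sub_ne_int_add_half hx hy
  exact ⟨p, hp, h_per, h_even, h_sq, h_zero, h_sqrt 0 (by norm_num)⟩
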